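/- Mixed-term bound via the projected entropy: if h : [0,∞) × 𝕋^d × ℝ^d → ℝ is smooth, bounded above and below by positive constants, has all partial derivatives bounded, satisfies ∫ h(t,·) dμ = 1 for all t, and solves ∂_t h + v·∇_x h = λ(Πh − h) with λ > 0, then for every η > 0 and all t ≥ 0: −I^M(h_t) ≤ (η/2) I^V(h_t) + (1/(2η)) ( I^X(h_t) − I^{ΠX}(h_t) ) − (d/dt) H_Π(h_t). -/

import Mathlib

/-!
Write `ρ = Πh`. Averaging the equation in `v` kills the relaxation term and leaves the continuity
equation `∂ₜρ = -∇ₓ · ∫ v h ℳ dv` (`continuity_equation`). Hence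
`d/dt H_Π = ∫ (log ρ + 1) ∂ₜρ dx` (`hasDerivAt_HPi`), and an integration by parts over the torus
followed by the Gaussian one, `∫ vᵢ h ℳ dv = ∫ ∂_{vᵢ} h ℳ dv`, gives
`d/dt H_Π = ∫ (∇ρ/ρ) · ∇ᵥh dμ` (`derivHPi_eq`). Therefore
`-I^M + d/dt H_Π = ∫ (∇ρ/ρ - ∇ₓh/h) · ∇ᵥh dμ`, and Young's inequality with weight `h`
(`intMu_young`) bounds this by `(η/2) I^V + (1/(2η)) ∫ h |∇ρ/ρ - ∇ₓh/h|² dμ`. Expanding the square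
and using `Π∇ₓh = ∇ρ`, the last integral is `I^X - 2 I^{ΠX} + I^{ΠX} = I^X - I^{ΠX}`.

Differentiation under the integral sign is justified once for bounded `C¹` integrands
(`param_integral`), and `intMu` is handled on bounded continuous integrands (`BC`).
-/

open MeasureTheory Real Filter

noncomputable section

/-- The standard Gaussian density `ℳ(v) = (2π)^{-d/2} exp(-|v|²/2)` on `ℝ^d`. -/
def gauss (d : ℕ) (v : Fin d → ℝ) : ℝ :=
  (2 * Real.pi) ^ (-(d : ℝ) / 2) * Real.exp (-(∑ i, v i ^ 2) / 2)

/-- Fundamental domain `[0,1]^d` of the torus `𝕋^d`; the normalized Lebesgue measure on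
the torus is the restriction of Lebesgue measure to this cube. -/
def cube (d : ℕ) : Set (Fin d → ℝ) := Set.Icc 0 1

/-- A function of `(x,v)` represents a function on `𝕋^d × ℝ^d` iff it is `ℤ^d`-periodic in `x`. -/
def IsPeriodic (d : ℕ) (f : (Fin d → ℝ) → (Fin d → ℝ) → ℝ) : Prop :=
  ∀ (x v : Fin d → ℝ) (k : Fin d → ℤ), f (x + fun i => (k i : ℝ)) v = f x v

/-- The projection `Πf(x) = ∫ f(x,u) ℳ(u) du`. -/
def proj (d : ℕ) (f : (Fin d → ℝ) → (Fin d → ℝ) → ℝ) (x : Fin d → ℝ) : ℝ :=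
  ∫ u, f x u * gauss d u

/-- Euclidean dot product on `ℝ^d`. -/
def dotp (d : ℕ) (a b : Fin d → ℝ) : ℝ := ∑ i, a i * b i

/-- Squared Euclidean norm on `ℝ^d`. -/
def nsq (d : ℕ) (a : Fin d → ℝ) : ℝ := ∑ i, a i ^ 2

/-- Gradient in the `x` variable. -/
def gradx (d : ℕ) (f : (Fin d → ℝ) → (Fin d → ℝ) → ℝ) (x v : Fin d → ℝ) : Fin d → ℝ :=
  fun i => fderiv ℝ (fun y => f y v) x (Pi.single i 1)

/-- Gradient in the `v` variable. -/
def gradv (d : ℕ) (f : (Fin d → ℝ) → (Fin d → ℝ) → ℝ) (x v : Fin d → ℝ) : Fin d → ℝ :=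
  fun i => fderiv ℝ (fun w => f x w) v (Pi.single i 1)

/-- Gradient of a function of `x` only. -/
def grad1 (d : ℕ) (g : (Fin d → ℝ) → ℝ) (x : Fin d → ℝ) : Fin d → ℝ :=
  fun i => fderiv ℝ g x (Pi.single i 1)

/-- Laplacian in the `v` variable. -/
def lapv (d : ℕ) (f : (Fin d → ℝ) → (Fin d → ℝ) → ℝ) (x v : Fin d → ℝ) : ℝ :=
  ∑ i, fderiv ℝ (fun w => gradv d f x w i) v (Pi.single i 1)

/-- Integral against `μ = ℳ(v) dv dx` on `𝕋^d × ℝ^d`. -/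
def intMu (d : ℕ) (F : (Fin d → ℝ) → (Fin d → ℝ) → ℝ) : ℝ :=
  ∫ x in cube d, ∫ v, F x v * gauss d v

/-- `I^X(h) = ∫ |∇_x h|²/h dμ`. -/
def IX (d : ℕ) (h : (Fin d → ℝ) → (Fin d → ℝ) → ℝ) : ℝ :=
  intMu d fun x v => nsq d (gradx d h x v) / h x v

/-- `I^V(h) = ∫ |∇_v h|²/h dμ`. -/
def IV (d : ℕ) (h : (Fin d → ℝ) → (Fin d → ℝ) → ℝ) : ℝ :=
  intMu d fun x v => nsq d (gradv d h x v) / h x v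

/-- `I^M(h) = ∫ (∇_x h · ∇_v h)/h dμ`. -/
def IM (d : ℕ) (h : (Fin d → ℝ) → (Fin d → ℝ) → ℝ) : ℝ :=
  intMu d fun x v => dotp d (gradx d h x v) (gradv d h x v) / h x v

/-- The full Fisher information `I(h) = ∫ |∇_{x,v} h|²/h dμ`. -/
def Ifull (d : ℕ) (h : (Fin d → ℝ) → (Fin d → ℝ) → ℝ) : ℝ :=
  intMu d fun x v => (nsq d (gradx d h x v) + nsq d (gradv d h x v)) / h x v

/-- `I^{ΠX}(h) = ∫_{𝕋^d} |∇_x Πh|²/Πh dx`. -/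
def IPiX (d : ℕ) (h : (Fin d → ℝ) → (Fin d → ℝ) → ℝ) : ℝ :=
  ∫ x in cube d, nsq d (grad1 d (proj d h) x) / proj d h x

/-- `I^{ΠX/X}(h) = ∫ (|∇_x(Πh/h)|²/(Πh/h)) h dμ`. -/
def IPiXX (d : ℕ) (h : (Fin d → ℝ) → (Fin d → ℝ) → ℝ) : ℝ :=
  intMu d fun x v =>
    nsq d (gradx d (fun y w => proj d h y / h y w) x v) / (proj d h x / h x v) * h x v

/-- `I^{ΠV/V}(h) = ∫ (|∇_v h|²/h)(Πh/h) dμ`. -/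
def IPiVV (d : ℕ) (h : (Fin d → ℝ) → (Fin d → ℝ) → ℝ) : ℝ :=
  intMu d fun x v => nsq d (gradv d h x v) / h x v * (proj d h x / h x v)

/-- The relative entropy `H(h) = ∫ h log h dμ`. -/
def Hent (d : ℕ) (h : (Fin d → ℝ) → (Fin d → ℝ) → ℝ) : ℝ :=
  intMu d fun x v => h x v * Real.log (h x v)

/-- The projected entropy `H_Π(h) = ∫_{𝕋^d} Πh log Πh dx`. -/
def HPi (d : ℕ) (h : (Fin d → ℝ) → (Fin d → ℝ) → ℝ) : ℝ :=
  ∫ x in cube d, proj d h x * Real.log (proj d h x)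

/-- The local average speed `U(x) = ∫ v h(x,v) ℳ(v) dv`. -/
def Uvec (d : ℕ) (h : (Fin d → ℝ) → (Fin d → ℝ) → ℝ) (x : Fin d → ℝ) : Fin d → ℝ :=
  fun i => ∫ v, v i * h x v * gauss d v

/-- The divergence `∇_x · U`. -/
def divU (d : ℕ) (h : (Fin d → ℝ) → (Fin d → ℝ) → ℝ) (x : Fin d → ℝ) : ℝ :=
  ∑ i, fderiv ℝ (fun y => Uvec d h y i) x (Pi.single i 1)

/-- The `p`-entropy `H^{(p)}(h) = ∫ (h^p - h)/(p(p-1)) dμ`. -/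
def Hp (d : ℕ) (p : ℝ) (h : (Fin d → ℝ) → (Fin d → ℝ) → ℝ) : ℝ :=
  intMu d fun x v => (h x v ^ p - h x v) / (p * (p - 1))

/-- The projected `p`-entropy `H_Π^{(p)}(h) = ∫_{𝕋^d} ((Πh)^p - Πh)/(p(p-1)) dx`. -/
def HpPi (d : ℕ) (p : ℝ) (h : (Fin d → ℝ) → (Fin d → ℝ) → ℝ) : ℝ :=
  ∫ x in cube d, ((proj d h x) ^ p - proj d h x) / (p * (p - 1))

/-- The `p`-Fisher information `I^{(p)}(h) = ∫ h^{p-2} |∇_{x,v} h|² dμ`. -/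
def Ipfull (d : ℕ) (p : ℝ) (h : (Fin d → ℝ) → (Fin d → ℝ) → ℝ) : ℝ :=
  intMu d fun x v => h x v ^ (p - 2) * (nsq d (gradx d h x v) + nsq d (gradv d h x v))

/-- The spatial `p`-Fisher information `∫ h^{p-2} |∇_x h|² dμ`. -/
def IpX (d : ℕ) (p : ℝ) (h : (Fin d → ℝ) → (Fin d → ℝ) → ℝ) : ℝ :=
  intMu d fun x v => h x v ^ (p - 2) * nsq d (gradx d h x v)

/-- Regularity of a time-dependent `h`: smooth, periodic in `x`, bounded above and below by
positive constants, with all partial derivatives bounded. -/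
def Regular (d : ℕ) (h : ℝ → (Fin d → ℝ) → (Fin d → ℝ) → ℝ) : Prop :=
  ContDiff ℝ (⊤ : ℕ∞) (fun q : ℝ × (Fin d → ℝ) × (Fin d → ℝ) => h q.1 q.2.1 q.2.2) ∧
  (∀ t, IsPeriodic d (h t)) ∧
  (∃ c C : ℝ, 0 < c ∧ ∀ t x v, c ≤ h t x v ∧ h t x v ≤ C) ∧
  (∀ n : ℕ, ∃ C : ℝ, ∀ q : ℝ × (Fin d → ℝ) × (Fin d → ℝ),
    ‖iteratedFDeriv ℝ n (fun r : ℝ × (Fin d → ℝ) × (Fin d → ℝ) => h r.1 r.2.1 r.2.2) q‖ ≤ C)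

/-- Regularity of a time-independent `h`: smooth, periodic in `x`, bounded above and below by
positive constants, with bounded gradient. -/
def RegularStatic (d : ℕ) (h : (Fin d → ℝ) → (Fin d → ℝ) → ℝ) : Prop :=
  ContDiff ℝ (⊤ : ℕ∞) (fun q : (Fin d → ℝ) × (Fin d → ℝ) => h q.1 q.2) ∧
  IsPeriodic d h ∧
  (∃ c C : ℝ, 0 < c ∧ ∀ x v, c ≤ h x v ∧ h x v ≤ C) ∧
  (∃ C : ℝ, ∀ q : (Fin d → ℝ) × (Fin d → ℝ),
    ‖fderiv ℝ (fun r : (Fin d → ℝ) × (Fin d → ℝ) => h r.1 r.2) q‖ ≤ C)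

/-- `h` solves the linear relaxation Boltzmann equation `∂_t h + v·∇_x h = λ(Πh - h)` for `t ≥ 0`. -/
def SolvesLRB (d : ℕ) (lam : ℝ) (h : ℝ → (Fin d → ℝ) → (Fin d → ℝ) → ℝ) : Prop :=
  ∀ t x v, 0 ≤ t →
    deriv (fun s => h s x v) t + dotp d v (gradx d (h t) x v)
      = lam * (proj d (h t) x - h t x v)

/-- `h` solves the free transport equation `∂_t h + v·∇_x h = 0` for `t ≥ 0`. -/
def SolvesTransport (d : ℕ) (h : ℝ → (Fin d → ℝ) → (Fin d → ℝ) → ℝ) : Prop :=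
  ∀ t x v, 0 ≤ t →
    deriv (fun s => h s x v) t + dotp d v (gradx d (h t) x v) = 0

/-- `h` solves the pure relaxation equation `∂_t h = λ(Πh - h)` for `t ≥ 0`. -/
def SolvesCollision (d : ℕ) (lam : ℝ) (h : ℝ → (Fin d → ℝ) → (Fin d → ℝ) → ℝ) : Prop :=
  ∀ t x v, 0 ≤ t →
    deriv (fun s => h s x v) t = lam * (proj d (h t) x - h t x v)

/-- `h` solves the kinetic Fokker–Planck equation `∂_t h + v·∇_x h = Δ_v h - v·∇_v h` for `t ≥ 0`. -/
def SolvesKFP (d : ℕ) (h : ℝ → (Fin d → ℝ) → (Fin d → ℝ) → ℝ) : Prop :=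
  ∀ t x v, 0 ≤ t →
    deriv (fun s => h s x v) t + dotp d v (gradx d (h t) x v)
      = lapv d (h t) x v - dotp d v (gradv d (h t) x v)

/-! ### Gaussian weight -/

lemma gauss_eq_prod (d : ℕ) (v : Fin d → ℝ) :
    gauss d v = ∏ i, ProbabilityTheory.gaussianPDFReal 0 1 (v i) := by
  have h2 : (0 : ℝ) ≤ 2 * π := by positivity
  simp only [gauss, ProbabilityTheory.gaussianPDFReal, Finset.prod_mul_distrib,
    ← Real.exp_sum, Finset.prod_const, Finset.card_univ, Fintype.card_fin]
  congr 1
  · rw [Real.sqrt_eq_rpow, NNReal.coe_one, mul_one, ← Real.rpow_neg h2, ← Real.rpow_natCast,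
      ← Real.rpow_mul h2]
    congr 1
    ring
  · congr 1
    simp only [sub_zero, NNReal.coe_one, mul_one, neg_div, Finset.sum_neg_distrib,
      Finset.sum_div]

lemma gauss_pos (d : ℕ) (v : Fin d → ℝ) : 0 < gauss d v := by
  unfold gauss; positivity

lemma gauss_integrable (d : ℕ) : Integrable (gauss d) := by
  rw [show gauss d = _ from funext (gauss_eq_prod d)]
  exact Integrable.fintype_prod
    (fun _ => ProbabilityTheory.integrable_gaussianPDFReal 0 1)

lemma gauss_integral (d : ℕ) : ∫ v, gauss d v = 1 := by
  simp_rw [gauss_eq_prod]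
  rw [integral_fintype_prod_volume_eq_prod
    (fun _ : Fin d => ProbabilityTheory.gaussianPDFReal 0 1)]
  simp [ProbabilityTheory.integral_gaussianPDFReal_eq_one]

/-- Integrability of the first moments: as a product of one-dimensional densities, only the
`i`-th factor acquires the extra weight. -/
lemma coord_gauss_integrable (d : ℕ) (i : Fin d) :
    Integrable (fun v : Fin d → ℝ => v i * gauss d v) := by
  have h1 : Integrable (fun x : ℝ => x * ProbabilityTheory.gaussianPDFReal 0 1 x) := by
    refine ((integrable_mul_exp_neg_mul_sq (b := 1 / 2) (by norm_num)).const_mul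
      (√(2 * π * (1 : NNReal)))⁻¹).congr (Eventually.of_forall fun x => ?_)
    simp only [ProbabilityTheory.gaussianPDFReal, NNReal.coe_one]
    rw [show -(x - 0) ^ 2 / (2 * 1) = -(1 / 2) * x ^ 2 by ring]
    ring
  have h2 : ∀ j : Fin d, Integrable (fun x : ℝ => (if j = i then x else 1) *
      ProbabilityTheory.gaussianPDFReal 0 1 x) := by
    intro j
    by_cases hj : j = i
    · simpa [hj] using h1
    · simpa [hj] using ProbabilityTheory.integrable_gaussianPDFReal 0 1
  have h3 := Integrable.fintype_prod (μ := fun _ : Fin d => (volume : Measure ℝ)) h2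
  refine h3.congr (Eventually.of_forall fun v => ?_)
  simp only [gauss_eq_prod, Finset.prod_mul_distrib]
  simp

lemma gauss_differentiableAt_and_fderiv (d : ℕ) (v : Fin d → ℝ) :
    DifferentiableAt ℝ (gauss d) v ∧
      ∀ i, fderiv ℝ (gauss d) v (Pi.single i 1) = -(v i * gauss d v) := by
  have h1 : HasFDerivAt (fun v : Fin d → ℝ => ∑ i, v i ^ 2)
      (∑ i, (2 * v i) • ContinuousLinearMap.proj (R := ℝ) (φ := fun _ : Fin d => ℝ) i) v := by
    refine HasFDerivAt.fun_sum fun i _ => ?_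
    have := (ContinuousLinearMap.proj (R := ℝ) (φ := fun _ : Fin d => ℝ) i).hasFDerivAt
      (x := v) |>.pow 2
    simpa using this
  have h2 := ((h1.neg.mul_const (2 : ℝ)⁻¹).exp.const_mul ((2 * π) ^ (-(d : ℝ) / 2)))
  have h3 : HasFDerivAt (gauss d) _ v := h2
  refine ⟨h3.differentiableAt, fun i => ?_⟩
  rw [h3.fderiv]
  simp [gauss, div_eq_mul_inv, Pi.single_apply]
  ring

/-! ### Parametric integrals -/

/-- Differentiation under the integral sign, with globally bounded data; the derivative is
continuous and bounded in the parameter. -/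
lemma param_integral {E V : Type*} [NormedAddCommGroup E] [NormedSpace ℝ E]
    [TopologicalSpace V] [MeasurableSpace V] [BorelSpace V] [SecondCountableTopology V]
    (ν : Measure V) (w : V → ℝ) (hw : Integrable w ν)
    (K : E → V → ℝ) (K' : E → V → (E →L[ℝ] ℝ))
    (hK : Continuous (Function.uncurry K)) (hK' : Continuous (Function.uncurry K'))
    (hd : ∀ e u, HasFDerivAt (fun e => K e u) (K' e u) e)
    (A B : ℝ) (hA : ∀ e u, |K e u| ≤ A) (hB : ∀ e u, ‖K' e u‖ ≤ B) :
    (∀ e, Integrable (fun u => w u • K' e u) ν) ∧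
    (∀ e, HasFDerivAt (fun e => ∫ u, K e u * w u ∂ν) (∫ u, w u • K' e u ∂ν) e) ∧
    Continuous (fun e => ∫ u, w u • K' e u ∂ν) ∧
    ∃ B', ∀ e, ‖∫ u, w u • K' e u ∂ν‖ ≤ B' := by
  have hKe : ∀ e, Continuous (K e) := fun e => hK.comp (by fun_prop : Continuous fun u => (e, u))
  have hKe' : ∀ e, Continuous (K' e) := fun e => hK'.comp (by fun_prop : Continuous fun u => (e, u))
  have hm : ∀ e, AEStronglyMeasurable (fun u => w u • K' e u) ν := fun e =>
    hw.1.smul (hKe' e).aestronglyMeasurable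
  have hbd : ∀ e u, ‖w u • K' e u‖ ≤ |w u| * B := fun e u => by
    rw [norm_smul]
    exact mul_le_mul_of_nonneg_left (hB e u) (norm_nonneg _)
  have hbi : Integrable (fun u => |w u| * B) ν := hw.abs.mul_const B
  have hi : ∀ e, Integrable (fun u => w u • K' e u) ν := fun e =>
    hbi.mono' (hm e) (Eventually.of_forall (hbd e))
  refine ⟨hi, fun e => ?_, ?_, ∫ u, |w u| * B ∂ν, fun e => ?_⟩
  · refine hasFDerivAt_integral_of_dominated_of_fderiv_le (s := Set.univ)
      (F := fun e u => K e u * w u) (F' := fun e u => w u • K' e u)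
      (bound := fun u => |w u| * B) Filter.univ_mem
      (Eventually.of_forall fun e => ((hKe e).aestronglyMeasurable).mul hw.1) ?_ (hm e)
      (Eventually.of_forall fun u e _ => hbd e u) hbi
      (Eventually.of_forall fun u e _ => (hd e u).mul_const (w u))
    exact hw.bdd_mul (hKe e).aestronglyMeasurable (Eventually.of_forall (hA e))
  · exact continuous_of_dominated hm (fun e => Eventually.of_forall (hbd e)) hbi
      (Eventually.of_forall fun u =>
        (hK'.comp (by fun_prop : Continuous fun e => (e, u))).const_smul (w u))
  · exact norm_integral_le_of_norm_le hbi (Eventually.of_forall (hbd e))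

/-! ### Bounded continuous integrands -/

/-- Bounded and jointly continuous functions of `(x, v)`: the class on which `intMu` is
linear and monotone. -/
def BC (d : ℕ) (F : (Fin d → ℝ) → (Fin d → ℝ) → ℝ) : Prop :=
  Continuous (Function.uncurry F) ∧ ∃ A, ∀ x v, |F x v| ≤ A

namespace BC

variable {d : ℕ} {F G : (Fin d → ℝ) → (Fin d → ℝ) → ℝ}

lemma add (hF : BC d F) (hG : BC d G) : BC d (fun x v => F x v + G x v) := by
  obtain ⟨cF, A, hA⟩ := hF
  obtain ⟨cG, B, hB⟩ := hG
  exact ⟨cF.add cG, A + B, fun x v => (abs_add_le _ _).trans (add_le_add (hA x v) (hB x v))⟩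

lemma mul (hF : BC d F) (hG : BC d G) : BC d (fun x v => F x v * G x v) := by
  obtain ⟨cF, A, hA⟩ := hF
  obtain ⟨cG, B, hB⟩ := hG
  refine ⟨cF.mul cG, A * B, fun x v => ?_⟩
  rw [abs_mul]
  exact mul_le_mul (hA x v) (hB x v) (abs_nonneg _) ((abs_nonneg _).trans (hA x v))

lemma const (c : ℝ) : BC d (fun _ _ => c) := ⟨continuous_const, |c|, fun _ _ => le_rfl⟩

lemma sum {ι : Type*} (s : Finset ι) {f : ι → (Fin d → ℝ) → (Fin d → ℝ) → ℝ}
    (hf : ∀ i, BC d (f i)) : BC d (fun x v => ∑ i ∈ s, f i x v) := by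
  classical
  induction s using Finset.induction_on with
  | empty => simpa using const 0
  | insert a s ha ih => simpa [Finset.sum_insert ha] using (hf a).add ih

lemma inv {c : ℝ} (hc : 0 < c) (hF : BC d F) (h : ∀ x v, c ≤ F x v) :
    BC d (fun x v => (F x v)⁻¹) := by
  refine ⟨hF.1.inv₀ fun q => (hc.trans_le (h q.1 q.2)).ne', c⁻¹, fun x v => ?_⟩
  have := hc.trans_le (h x v)
  rw [abs_of_pos (by positivity)]
  exact inv_anti₀ hc (h x v)

lemma integrable (hF : BC d F) (x : Fin d → ℝ) : Integrable (fun v => F x v * gauss d v) := by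
  obtain ⟨cF, A, hA⟩ := hF
  exact (gauss_integrable d).bdd_mul
    (cF.comp (by fun_prop : Continuous fun v => (x, v))).aestronglyMeasurable
    (Eventually.of_forall (hA x))

lemma continuous_integral (hF : BC d F) : Continuous (fun x => ∫ v, F x v * gauss d v) := by
  have hi := hF.integrable
  obtain ⟨cF, A, hA⟩ := hF
  refine continuous_of_dominated (bound := fun v => A * gauss d v) (fun x => (hi x).1)
    (fun x => Eventually.of_forall fun v => ?_) ((gauss_integrable d).const_mul A)
    (Eventually.of_forall fun v =>
      (cF.comp (by fun_prop : Continuous fun x => (x, v))).mul_const _)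
  rw [norm_mul, Real.norm_of_nonneg (gauss_pos d v).le]
  exact mul_le_mul_of_nonneg_right (hA x v) (gauss_pos d v).le

lemma integrableOn (hF : BC d F) : IntegrableOn (fun x => ∫ v, F x v * gauss d v) (cube d) :=
  hF.continuous_integral.continuousOn.integrableOn_compact isCompact_Icc

lemma intMu_add (hF : BC d F) (hG : BC d G) :
    intMu d (fun x v => F x v + G x v) = intMu d F + intMu d G := by
  unfold intMu
  rw [← integral_add hF.integrableOn hG.integrableOn]
  refine integral_congr_ae (Eventually.of_forall fun x => ?_)
  simp only [add_mul]
  exact integral_add (hF.integrable x) (hG.integrable x)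

lemma intMu_mono (hF : BC d F) (hG : BC d G) (h : ∀ x v, F x v ≤ G x v) :
    intMu d F ≤ intMu d G :=
  integral_mono hF.integrableOn hG.integrableOn fun x =>
    integral_mono (hF.integrable x) (hG.integrable x) fun v =>
      mul_le_mul_of_nonneg_right (h x v) (gauss_pos d v).le

end BC

lemma intMu_const_mul (d : ℕ) (c : ℝ) (F : (Fin d → ℝ) → (Fin d → ℝ) → ℝ) :
    intMu d (fun x v => c * F x v) = c * intMu d F := by
  simp only [intMu, mul_assoc, integral_const_mul]

/-! ### Integration by parts -/

/-- Stein's identity `∫ vᵢ f ℳ dv = ∫ ∂ᵢ f ℳ dv` for bounded `f` with bounded continuous `∂ᵢ f`. -/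
lemma integral_coord_gauss {d : ℕ} (i : Fin d) (f : (Fin d → ℝ) → ℝ)
    (hf : Differentiable ℝ f) (hf' : Continuous fun v => fderiv ℝ f v (Pi.single i 1))
    (A B : ℝ) (hA : ∀ v, |f v| ≤ A) (hB : ∀ v, |fderiv ℝ f v (Pi.single i 1)| ≤ B) :
    ∫ v, f v * (v i * gauss d v) = ∫ v, fderiv ℝ f v (Pi.single i 1) * gauss d v := by
  have hE : ∀ v, fderiv ℝ (gauss d) v (Pi.single i 1) = -(v i * gauss d v) :=
    fun v => (gauss_differentiableAt_and_fderiv d v).2 i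
  have key := integral_mul_fderiv_eq_neg_fderiv_mul_of_integrable (μ := volume)
    (f := f) (g := gauss d) (v := Pi.single i 1)
    ((gauss_integrable d).bdd_mul hf'.aestronglyMeasurable (Eventually.of_forall hB))
    (by
      simp only [hE]
      exact (coord_gauss_integrable d i).neg.bdd_mul hf.continuous.aestronglyMeasurable
        (Eventually.of_forall hA))
    ((gauss_integrable d).bdd_mul hf.continuous.aestronglyMeasurable (Eventually.of_forall hA))
    (fun x _ => hf x) (fun x _ => (gauss_differentiableAt_and_fderiv d x).1)
  simp only [hE, mul_neg, integral_neg, neg_inj] at key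
  exact key

/-- The divergence of a periodic `C¹` vector field integrates to zero over the torus. -/
lemma integral_div_periodic {d : ℕ} (hd : 1 ≤ d) (f : Fin d → (Fin d → ℝ) → ℝ)
    (f' : Fin d → (Fin d → ℝ) → ((Fin d → ℝ) →L[ℝ] ℝ))
    (hf : ∀ i x, HasFDerivAt (f i) (f' i x) x) (hc : ∀ i, Continuous (f' i))
    (hper : ∀ i x (k : Fin d → ℤ), f i (x + fun j => (k j : ℝ)) = f i x) :
    ∫ x in cube d, ∑ i, f' i x (Pi.single i 1) = 0 := by
  obtain ⟨n, rfl⟩ : ∃ n, d = n + 1 := ⟨d - 1, by omega⟩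
  unfold cube
  rw [integral_divergence_of_hasFDerivAt_off_countable' (0 : Fin (n + 1) → ℝ) 1 zero_le_one f f' ∅
    Set.countable_empty
    (fun i => (continuous_iff_continuousAt.2 fun x => (hf i x).continuousAt).continuousOn)
    (fun x _ i => hf i x)
    (Continuous.integrableOn_Icc (continuous_finsetSum _ fun i _ => (hc i).clm_apply
      continuous_const))]
  refine Finset.sum_eq_zero fun i _ => sub_eq_zero.2 ?_
  congr 1
  funext y
  -- Opposite faces `xᵢ = 0` and `xᵢ = 1` differ by the lattice vector `eᵢ`.
  rw [← hper i (i.insertNth ((0 : Fin (n + 1) → ℝ) i) y) (Pi.single i 1)]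
  congr 1
  funext j
  refine Fin.succAboveCases i ?_ (fun k => ?_) j <;> simp

/-! ### Weighted Young inequality -/

/-- Integrated form of `b · (r - a/f) ≤ (η/2) |b|²/f + (1/(2η)) f |r - a/f|²` with `a = gx`,
`b = gv`, the last square being expanded. -/
lemma intMu_young {d : ℕ} {f : (Fin d → ℝ) → (Fin d → ℝ) → ℝ}
    {gx gv r : Fin d → (Fin d → ℝ) → (Fin d → ℝ) → ℝ} {c η : ℝ} (hc : 0 < c) (hη : 0 < η)
    (hf : BC d f) (hcf : ∀ x v, c ≤ f x v)
    (hgx : ∀ i, BC d (gx i)) (hgv : ∀ i, BC d (gv i)) (hr : ∀ i, BC d (r i)) :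
    -intMu d (fun x v => (∑ i, gx i x v * gv i x v) / f x v)
        + intMu d (fun x v => ∑ i, r i x v * gv i x v)
      ≤ η / 2 * intMu d (fun x v => (∑ i, gv i x v ^ 2) / f x v)
        + 1 / (2 * η) * (intMu d (fun x v => (∑ i, gx i x v ^ 2) / f x v)
          + (-2 * intMu d (fun x v => ∑ i, r i x v * gx i x v)
            + intMu d (fun x v => ∑ i, r i x v ^ 2 * f x v))) := by
  have hfi := BC.inv hc hf hcf
  have b1 : BC d (fun x v => (∑ i, gx i x v * gv i x v) / f x v) := by
    simpa only [div_eq_mul_inv] using (BC.sum _ fun i => (hgx i).mul (hgv i)).mul hfi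
  have b2 : BC d (fun x v => ∑ i, r i x v * gv i x v) := BC.sum _ fun i => (hr i).mul (hgv i)
  have b3 : BC d (fun x v => (∑ i, gv i x v ^ 2) / f x v) := by
    simpa only [div_eq_mul_inv, sq] using (BC.sum _ fun i => (hgv i).mul (hgv i)).mul hfi
  have b4 : BC d (fun x v => (∑ i, gx i x v ^ 2) / f x v) := by
    simpa only [div_eq_mul_inv, sq] using (BC.sum _ fun i => (hgx i).mul (hgx i)).mul hfi
  have b5 : BC d (fun x v => ∑ i, r i x v * gx i x v) := BC.sum _ fun i => (hr i).mul (hgx i)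
  have b6 : BC d (fun x v => ∑ i, r i x v ^ 2 * f x v) := by
    simpa only [sq] using BC.sum _ fun i => ((hr i).mul (hr i)).mul hf
  have b1' := (BC.const (-1)).mul b1
  have b3' := (BC.const (η / 2)).mul b3
  have b5' := (BC.const (-2)).mul b5
  have b56 := b5'.add b6
  have b456 := b4.add b56
  have b456' := (BC.const (1 / (2 * η))).mul b456
  have key := BC.intMu_mono (b1'.add b2) (b3'.add b456') (fun x v => ?_)
  · rw [b1'.intMu_add b2, b3'.intMu_add b456', intMu_const_mul, intMu_const_mul, intMu_const_mul,
      b4.intMu_add b56, b5'.intMu_add b6, intMu_const_mul, neg_one_mul] at key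
    exact key
  · have hp : 0 < f x v := hc.trans_le (hcf x v)
    simp only [Finset.sum_div, Finset.mul_sum, ← Finset.sum_add_distrib]
    refine Finset.sum_le_sum fun i _ => ?_
    rw [← sub_nonneg]
    -- Completing the square.
    have : 0 ≤ (η * gv i x v + gx i x v - r i x v * f x v) ^ 2 / (2 * η * f x v) := by positivity
    refine this.trans_eq ?_
    field_simp
    ring

/-! ### Derivatives and velocity averages of a regular density -/

section Density

variable {d : ℕ} {h : ℝ → (Fin d → ℝ) → (Fin d → ℝ) → ℝ}

/-- The total derivative of `h` with respect to `(t, x, v)`. -/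
def totalD (d : ℕ) (h : ℝ → (Fin d → ℝ) → (Fin d → ℝ) → ℝ) (t : ℝ) (x v : Fin d → ℝ) :
    (ℝ × (Fin d → ℝ) × (Fin d → ℝ)) →L[ℝ] ℝ :=
  fderiv ℝ (fun q : ℝ × (Fin d → ℝ) × (Fin d → ℝ) => h q.1 q.2.1 q.2.2) (t, x, v)

/-- The inclusion `(t, x) ↦ (t, x, 0)`. -/
def inclTX (d : ℕ) : (ℝ × (Fin d → ℝ)) →L[ℝ] (ℝ × (Fin d → ℝ) × (Fin d → ℝ)) :=
  (ContinuousLinearMap.fst ℝ ℝ (Fin d → ℝ)).prod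
    ((ContinuousLinearMap.snd ℝ ℝ (Fin d → ℝ)).prod 0)

/-- The derivative of `h` with respect to `(t, x)`. -/
def derivTX (d : ℕ) (h : ℝ → (Fin d → ℝ) → (Fin d → ℝ) → ℝ) (e : ℝ × (Fin d → ℝ))
    (v : Fin d → ℝ) : (ℝ × (Fin d → ℝ)) →L[ℝ] ℝ :=
  (totalD d h e.1 e.2 v).comp (inclTX d)

lemma totalD_hasFDerivAt (hreg : Regular d h) (t : ℝ) (x v : Fin d → ℝ) :
    HasFDerivAt (fun q : ℝ × (Fin d → ℝ) × (Fin d → ℝ) => h q.1 q.2.1 q.2.2)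
      (totalD d h t x v) (t, x, v) :=
  (hreg.1.differentiable (by simp) _).hasFDerivAt

lemma totalD_continuous (hreg : Regular d h) :
    Continuous (fun q : ℝ × (Fin d → ℝ) × (Fin d → ℝ) => totalD d h q.1 q.2.1 q.2.2) :=
  hreg.1.continuous_fderiv (by simp)

lemma totalD_bounded (hreg : Regular d h) : ∃ B, ∀ t x v, ‖totalD d h t x v‖ ≤ B := by
  obtain ⟨B, hB⟩ := hreg.2.2.2 1
  refine ⟨B, fun t x v => ?_⟩
  have := hB (t, x, v)
  rwa [norm_iteratedFDeriv_one] at this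

lemma derivTX_hasFDerivAt (hreg : Regular d h) (e : ℝ × (Fin d → ℝ)) (v : Fin d → ℝ) :
    HasFDerivAt (fun e : ℝ × (Fin d → ℝ) => h e.1 e.2 v) (derivTX d h e v) e := by
  have h1 : HasFDerivAt (fun e : ℝ × (Fin d → ℝ) => (e.1, e.2, v)) (inclTX d) e :=
    hasFDerivAt_fst.prodMk (hasFDerivAt_snd.prodMk (hasFDerivAt_const v e))
  exact (totalD_hasFDerivAt hreg e.1 e.2 v).comp e h1

lemma gradx_eq (hreg : Regular d h) (t : ℝ) (x v : Fin d → ℝ) (i : Fin d) :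
    gradx d (h t) x v i = totalD d h t x v (0, Pi.single i 1, 0) := by
  have h1 : HasFDerivAt (fun y : Fin d → ℝ => (t, y, v))
      ((0 : (Fin d → ℝ) →L[ℝ] ℝ).prod ((ContinuousLinearMap.id ℝ (Fin d → ℝ)).prod 0)) x :=
    (hasFDerivAt_const t x).prodMk ((hasFDerivAt_id x).prodMk (hasFDerivAt_const v x))
  have h2 := (totalD_hasFDerivAt hreg t x v).comp x h1
  have h3 : HasFDerivAt (fun y => h t y v) _ x := h2
  rw [gradx, h3.fderiv]
  simp

lemma gradv_eq (hreg : Regular d h) (t : ℝ) (x v : Fin d → ℝ) (i : Fin d) :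
    DifferentiableAt ℝ (fun w => h t x w) v ∧
    gradv d (h t) x v i = totalD d h t x v (0, 0, Pi.single i 1) := by
  have h1 : HasFDerivAt (fun w : Fin d → ℝ => (t, x, w))
      ((0 : (Fin d → ℝ) →L[ℝ] ℝ).prod
        ((0 : (Fin d → ℝ) →L[ℝ] (Fin d → ℝ)).prod (ContinuousLinearMap.id ℝ (Fin d → ℝ)))) v :=
    (hasFDerivAt_const t v).prodMk ((hasFDerivAt_const x v).prodMk (hasFDerivAt_id v))
  have h2 := (totalD_hasFDerivAt hreg t x v).comp v h1
  have h3 : HasFDerivAt (fun w => h t x w) _ v := h2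
  refine ⟨h3.differentiableAt, ?_⟩
  rw [gradv, h3.fderiv]
  simp

lemma derivt_eq (hreg : Regular d h) (t : ℝ) (x v : Fin d → ℝ) :
    deriv (fun s => h s x v) t = totalD d h t x v (1, 0, 0) := by
  have h1 : HasDerivAt (fun s : ℝ => (s, x, v)) (1, 0, 0) t :=
    (hasDerivAt_id t).prodMk ((hasDerivAt_const t x).prodMk (hasDerivAt_const t v))
  exact ((totalD_hasFDerivAt hreg t x v).comp_hasDerivAt t h1).deriv

lemma bc_totalD (hreg : Regular d h) (t : ℝ) (y : ℝ × (Fin d → ℝ) × (Fin d → ℝ)) :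
    BC d (fun x v => totalD d h t x v y) := by
  obtain ⟨B, hB⟩ := totalD_bounded hreg
  refine ⟨?_, B * ‖y‖, fun x v => (totalD d h t x v).le_of_opNorm_le (hB t x v) y⟩
  exact ((totalD_continuous hreg).comp
    (by fun_prop : Continuous fun q : (Fin d → ℝ) × (Fin d → ℝ) => (t, q.1, q.2))).clm_apply
    continuous_const

lemma bc_self (hreg : Regular d h) (t : ℝ) : BC d (h t) := by
  obtain ⟨c, C, hc, hb⟩ := hreg.2.2.1
  refine ⟨hreg.1.continuous.comp
    (by fun_prop : Continuous fun q : (Fin d → ℝ) × (Fin d → ℝ) => (t, q.1, q.2)), C,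
    fun x v => ?_⟩
  rw [abs_of_nonneg (hc.le.trans (hb t x v).1)]
  exact (hb t x v).2

/-- The moment `∫ h(t,x,u) w(u) du`. -/
def moment (d : ℕ) (h : ℝ → (Fin d → ℝ) → (Fin d → ℝ) → ℝ) (w : (Fin d → ℝ) → ℝ)
    (e : ℝ × (Fin d → ℝ)) : ℝ :=
  ∫ u, h e.1 e.2 u * w u

/-- The `(t, x)`-derivative of `moment`. -/
def momentD (d : ℕ) (h : ℝ → (Fin d → ℝ) → (Fin d → ℝ) → ℝ) (w : (Fin d → ℝ) → ℝ)
    (e : ℝ × (Fin d → ℝ)) : (ℝ × (Fin d → ℝ)) →L[ℝ] ℝ :=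
  ∫ u, w u • derivTX d h e u

lemma moment_spec (hreg : Regular d h) {w : (Fin d → ℝ) → ℝ} (hw : Integrable w) :
    (∀ e, HasFDerivAt (moment d h w) (momentD d h w e) e) ∧
    Continuous (momentD d h w) ∧ (∃ B, ∀ e, ‖momentD d h w e‖ ≤ B) ∧
    ∀ t x y, momentD d h w (t, x) y = ∫ u, totalD d h t x u (y.1, y.2, 0) * w u := by
  obtain ⟨c, C, hc, hb⟩ := hreg.2.2.1
  obtain ⟨B, hB⟩ := totalD_bounded hreg
  obtain ⟨h1, h2, h3, h4⟩ := param_integral volume w hw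
    (fun e : ℝ × (Fin d → ℝ) => h e.1 e.2) (derivTX d h)
    (hreg.1.continuous.comp (by fun_prop :
      Continuous fun q : (ℝ × (Fin d → ℝ)) × (Fin d → ℝ) => (q.1.1, q.1.2, q.2)))
    (((totalD_continuous hreg).comp (by fun_prop :
      Continuous fun q : (ℝ × (Fin d → ℝ)) × (Fin d → ℝ) => (q.1.1, q.1.2, q.2))).clm_comp
      continuous_const)
    (derivTX_hasFDerivAt hreg) C (B * ‖inclTX d‖)
    (fun e u => by
      rw [abs_of_nonneg (hc.le.trans (hb e.1 e.2 u).1)]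
      exact (hb e.1 e.2 u).2)
    (fun e u => (ContinuousLinearMap.opNorm_comp_le _ _).trans
      (mul_le_mul_of_nonneg_right (hB _ _ _) (norm_nonneg _)))
  refine ⟨h2, h3, h4, fun t x y => ?_⟩
  rw [momentD, ContinuousLinearMap.integral_apply (h1 (t, x))]
  refine integral_congr_ae (Eventually.of_forall fun u => ?_)
  simp [derivTX, inclTX, mul_comm]

lemma moment_periodic (hreg : Regular d h) (w : (Fin d → ℝ) → ℝ) (t : ℝ) (x : Fin d → ℝ)
    (k : Fin d → ℤ) : moment d h w (t, x + fun j => (k j : ℝ)) = moment d h w (t, x) := by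
  simp only [moment, hreg.2.1 t _ _ k]

lemma proj_eq_moment (t : ℝ) (x : Fin d → ℝ) : proj d (h t) x = moment d h (gauss d) (t, x) := rfl

lemma proj_bounds (hreg : Regular d h) :
    ∃ c C : ℝ, 0 < c ∧ (∀ t x v, c ≤ h t x v) ∧
      ∀ e, c ≤ moment d h (gauss d) e ∧ moment d h (gauss d) e ≤ C := by
  obtain ⟨c, C, hc, hb⟩ := hreg.2.2.1
  refine ⟨c, C, hc, fun t x v => (hb t x v).1, fun e => ⟨?_, ?_⟩⟩
  · have := integral_mono ((gauss_integrable d).const_mul c) ((bc_self hreg e.1).integrable e.2)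
      (fun v => mul_le_mul_of_nonneg_right (hb e.1 e.2 v).1 (gauss_pos d v).le)
    rwa [integral_const_mul, gauss_integral, mul_one] at this
  · have := integral_mono ((bc_self hreg e.1).integrable e.2) ((gauss_integrable d).const_mul C)
      (fun v => mul_le_mul_of_nonneg_right (hb e.1 e.2 v).2 (gauss_pos d v).le)
    rwa [integral_const_mul, gauss_integral, mul_one] at this

lemma grad1_proj (hreg : Regular d h) (t : ℝ) (x : Fin d → ℝ) (i : Fin d) :
    grad1 d (proj d (h t)) x i = momentD d h (gauss d) (t, x) (0, Pi.single i 1) := by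
  have h1 : HasFDerivAt (fun y : Fin d → ℝ => (t, y)) (ContinuousLinearMap.inr ℝ ℝ _) x :=
    hasFDerivAt_prodMk_right t x
  have h2 : HasFDerivAt (proj d (h t)) _ x :=
    ((moment_spec hreg (gauss_integrable d)).1 (t, x)).comp x h1
  rw [grad1, h2.fderiv]
  simp

/-- Continuity equation: `∂ₜ Πh = -∇ₓ · ∫ v h ℳ dv`, the relaxation term having zero
velocity average. -/
lemma continuity_equation (hreg : Regular d h) {lam : ℝ} (hpde : SolvesLRB d lam h)
    {t : ℝ} (ht : 0 ≤ t) (x : Fin d → ℝ) :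
    momentD d h (gauss d) (t, x) (1, 0)
      = -∑ i, momentD d h (fun v => v i * gauss d v) (t, x) (0, Pi.single i 1) := by
  rw [(moment_spec hreg (gauss_integrable d)).2.2.2]
  simp only [fun i => (moment_spec hreg (coord_gauss_integrable d i)).2.2.2]
  have hint : ∀ i, Integrable (fun u : Fin d → ℝ =>
      totalD d h t x u (0, Pi.single i 1, 0) * (u i * gauss d u)) := fun i => by
    obtain ⟨hc, A, hA⟩ := bc_totalD hreg t (0, Pi.single i 1, 0)
    exact (coord_gauss_integrable d i).bdd_mul
      (hc.comp (by fun_prop : Continuous fun v => (x, v))).aestronglyMeasurable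
      (Eventually.of_forall (hA x))
  have hsum := integrable_finsetSum Finset.univ fun i _ => hint i
  have hg := (gauss_integrable d).const_mul (lam * proj d (h t) x)
  have hh := ((bc_self hreg t).integrable x).const_mul lam
  rw [← integral_finsetSum _ fun i _ => hint i, ← integral_neg]
  have hz : ∫ u, (lam * proj d (h t) x * gauss d u - lam * (h t x u * gauss d u)) = 0 := by
    rw [integral_sub hg hh, integral_const_mul, integral_const_mul, gauss_integral, proj]
    ring
  refine Eq.trans ?_ ((integral_add hsum.neg (hg.sub hh)).trans
    ((congrArg (_ + ·) hz).trans (add_zero _)))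
  refine integral_congr_ae (Eventually.of_forall fun u => ?_)
  simp only [Pi.neg_apply, Pi.sub_apply]
  have := hpde t x u ht
  rw [derivt_eq hreg] at this
  simp only [dotp, gradx_eq hreg] at this
  have h2 : ∑ i, totalD d h t x u (0, Pi.single i 1, 0) * (u i * gauss d u)
      = (∑ i, u i * totalD d h t x u (0, Pi.single i 1, 0)) * gauss d u := by
    rw [Finset.sum_mul]
    exact Finset.sum_congr rfl fun i _ => by ring
  simp only [h2]
  rw [eq_sub_of_add_eq this]
  ring

/-- Gaussian integration by parts: `∫ vᵢ h ℳ dv = ∫ ∂_{vᵢ} h ℳ dv`. -/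
lemma moment_coord (hreg : Regular d h) (t : ℝ) (x : Fin d → ℝ) (i : Fin d) :
    moment d h (fun v => v i * gauss d v) (t, x)
      = ∫ v, gradv d (h t) x v i * gauss d v := by
  obtain ⟨hc, A, hA⟩ := bc_self hreg t
  obtain ⟨hc', B, hB⟩ := bc_totalD hreg t (0, 0, Pi.single i 1)
  have he : ∀ v, fderiv ℝ (fun w => h t x w) v (Pi.single i 1)
      = totalD d h t x v (0, 0, Pi.single i 1) := fun v => (gradv_eq hreg t x v i).2
  refine integral_coord_gauss i (fun v => h t x v) (fun v => (gradv_eq hreg t x v i).1) ?_ A B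
    (hA x) ?_
  · simp only [he]
    exact hc'.comp (by fun_prop : Continuous fun v => (x, v))
  · simpa only [he] using hB x

/-- The time derivative of the projected entropy. -/
lemma hasDerivAt_HPi (hreg : Regular d h) (t : ℝ) :
    HasDerivAt (fun s => HPi d (h s))
      (∫ x in cube d, (Real.log (proj d (h t) x) + 1) * momentD d h (gauss d) (t, x) (1, 0)) t := by
  obtain ⟨c, C, hc, -, hb⟩ := proj_bounds hreg
  obtain ⟨hD, hDc, ⟨B, hB⟩, -⟩ := moment_spec hreg (gauss_integrable d)
  set ρ := moment d h (gauss d) with hρ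
  set ρ' := momentD d h (gauss d) with hρ'
  have hpos : ∀ e, 0 < ρ e := fun e => hc.trans_le (hb e).1
  have hρc : Continuous ρ := continuous_iff_continuousAt.2 fun e => (hD e).continuousAt
  have hlc : Continuous fun e => Real.log (ρ e) := hρc.log fun e => (hpos e).ne'
  have hlog : ∀ e, |Real.log (ρ e)| ≤ max |Real.log c| |Real.log C| := fun e =>
    abs_le_max_abs_abs (Real.log_le_log hc (hb e).1) (Real.log_le_log (hpos e) (hb e).2)
  have hfin : Integrable (fun _ : Fin d → ℝ => (1 : ℝ)) (volume.restrict (cube d)) :=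
    continuous_const.integrableOn_Icc
  have hKd : ∀ s x, HasDerivAt (fun s => ρ (s, x) * Real.log (ρ (s, x)))
      ((Real.log (ρ (s, x)) + 1) * ρ' (s, x) (1, 0)) s := fun s x => by
    have h1 : HasDerivAt (fun s : ℝ => (s, x)) (1, 0) s :=
      (hasDerivAt_id s).prodMk (hasDerivAt_const s x)
    have h2 : HasDerivAt (fun s => ρ (s, x)) (ρ' (s, x) (1, 0)) s :=
      HasFDerivAt.comp_hasDerivAt (l := ρ) s (hD (s, x)) h1
    exact (Real.hasDerivAt_mul_log (hpos (s, x)).ne').comp s h2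
  have hcd : Continuous fun e => (Real.log (ρ e) + 1) * ρ' e (1, 0) :=
    (hlc.add continuous_const).mul (hDc.clm_apply continuous_const)
  obtain ⟨h1, h2, -, -⟩ := param_integral (volume.restrict (cube d)) (fun _ => (1 : ℝ)) hfin
    (fun s x => ρ (s, x) * Real.log (ρ (s, x)))
    (fun s x => ContinuousLinearMap.toSpanSingleton ℝ
      ((Real.log (ρ (s, x)) + 1) * ρ' (s, x) (1, 0)))
    (hρc.mul hlc)
    ((ContinuousLinearMap.toSpanSingletonCLE (𝕜 := ℝ) (E := ℝ)).continuous.comp hcd)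
    (fun s x => (hKd s x).hasFDerivAt)
    (C * max |Real.log c| |Real.log C|)
    ((max |Real.log c| |Real.log C| + 1) * (B * ‖((1 : ℝ), (0 : Fin d → ℝ))‖))
    (fun s x => by
      rw [abs_mul, abs_of_pos (hpos _)]
      exact mul_le_mul (hb _).2 (hlog _) (abs_nonneg _) ((hpos (s, x)).le.trans (hb _).2))
    (fun s x => by
      rw [ContinuousLinearMap.norm_toSpanSingleton, norm_mul]
      refine mul_le_mul ?_ ((ρ' (s, x)).le_of_opNorm_le (hB _) _) (norm_nonneg _) (by positivity)
      exact (norm_add_le _ _).trans (add_le_add (hlog _) (by simp)))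
  have h3 := (h2 t).hasDerivAt
  rw [ContinuousLinearMap.integral_apply (h1 t)] at h3
  simpa [HPi, proj_eq_moment] using h3

/-- The entropy dissipation identity `d/dt H_Π = ∫ (∇Πh / Πh) · ∇ᵥ h dμ`, obtained by integrating
the continuity equation by parts, over the torus in `x` and against the Gaussian in `v`. -/
lemma derivHPi_eq (hd : 1 ≤ d) (hreg : Regular d h) {lam : ℝ} (hpde : SolvesLRB d lam h)
    {t : ℝ} (ht : 0 ≤ t) :
    ∫ x in cube d, (Real.log (proj d (h t) x) + 1) * momentD d h (gauss d) (t, x) (1, 0)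
      = intMu d (fun x v => ∑ i, grad1 d (proj d (h t)) x i / proj d (h t) x
          * gradv d (h t) x v i) := by
  obtain ⟨c, C, hc, -, hb⟩ := proj_bounds hreg
  obtain ⟨hD, hDc, -, -⟩ := moment_spec hreg (gauss_integrable d)
  have hG := fun i => moment_spec hreg (coord_gauss_integrable d i)
  simp only [proj_eq_moment, grad1_proj hreg]
  set ρ := moment d h (gauss d) with hρ
  set ρ' := momentD d h (gauss d) with hρ'
  have hpos : ∀ e, 0 < ρ e := fun e => hc.trans_le (hb e).1
  have hρc : Continuous ρ := continuous_iff_continuousAt.2 fun e => (hD e).continuousAt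
  have hlc : Continuous fun e => Real.log (ρ e) := hρc.log fun e => (hpos e).ne'
  have hGc : ∀ i, Continuous (moment d h fun v => v i * gauss d v) := fun i =>
    continuous_iff_continuousAt.2 fun e => ((hG i).1 e).continuousAt
  -- The flux `(log Πh + 1) ∫ v h ℳ dv` is periodic, so its divergence has zero integral.
  have hdiv := integral_div_periodic hd
    (fun i x => (Real.log (ρ (t, x)) + 1) * moment d h (fun v => v i * gauss d v) (t, x))
    (fun i x => ((Real.log (ρ (t, x)) + 1) • momentD d h (fun v => v i * gauss d v) (t, x)
      + moment d h (fun v => v i * gauss d v) (t, x) • ((ρ (t, x))⁻¹ • ρ' (t, x))).comp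
        (ContinuousLinearMap.inr ℝ ℝ (Fin d → ℝ)))
    (fun i x => by
      have h1 : HasFDerivAt (fun y : Fin d → ℝ => (t, y)) (ContinuousLinearMap.inr ℝ ℝ _) x :=
        hasFDerivAt_prodMk_right t x
      exact ((((hD (t, x)).log (hpos _).ne').add_const 1).mul ((hG i).1 (t, x))).comp x h1)
    (fun i => by
      have hx : Continuous fun x : Fin d → ℝ => (t, x) := by fun_prop
      exact Continuous.clm_comp ((((hlc.add continuous_const).smul (hG i).2.1).add
        ((hGc i).smul ((hρc.inv₀ fun e => (hpos e).ne').smul hDc))).comp hx) continuous_const)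
    (fun i x k => by rw [hρ, moment_periodic hreg, moment_periodic hreg])
  have hx : Continuous fun x : Fin d → ℝ => (t, x) := by fun_prop
  have hI1 : IntegrableOn (fun x => (Real.log (ρ (t, x)) + 1) * ρ' (t, x) (1, 0)) (cube d) :=
    (((hlc.add continuous_const).mul (hDc.clm_apply continuous_const)).comp hx).integrableOn_Icc
  have hI2 : IntegrableOn (fun x => ∑ i, ρ' (t, x) (0, Pi.single i 1) / ρ (t, x)
      * moment d h (fun v => v i * gauss d v) (t, x)) (cube d) :=
    ((continuous_finsetSum _ fun i _ => (((hDc.clm_apply continuous_const).div hρc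
      fun e => (hpos e).ne').mul (hGc i))).comp hx).integrableOn_Icc
  have hR : intMu d (fun x v => ∑ i, ρ' (t, x) (0, Pi.single i 1) / ρ (t, x)
      * gradv d (h t) x v i) = ∫ x in cube d, ∑ i, ρ' (t, x) (0, Pi.single i 1) / ρ (t, x)
      * moment d h (fun v => v i * gauss d v) (t, x) := by
    refine integral_congr_ae (Eventually.of_forall fun x => ?_)
    simp only [moment_coord hreg, Finset.sum_mul, mul_assoc, ← integral_const_mul]
    refine integral_finsetSum _ fun i _ => Integrable.const_mul ?_ _
    simpa only [(gradv_eq hreg _ _ _ _).2] using (bc_totalD hreg t (0, 0, Pi.single i 1)).integrable x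
  rw [hR, ← sub_eq_zero, ← integral_sub hI1 hI2, ← neg_eq_zero, ← integral_neg]
  refine (integral_congr_ae (Eventually.of_forall fun x => ?_)).trans hdiv
  simp only [hρ', continuity_equation hreg hpde ht x]
  rw [mul_neg, neg_sub, sub_neg_eq_add, Finset.mul_sum, ← Finset.sum_add_distrib]
  refine Finset.sum_congr rfl fun i _ => ?_
  simp
  ring

end Density

/-- Mixed-term bound via the projected entropy: for every `η > 0`,
`-I^M(h_t) ≤ (η/2) I^V(h_t) + (1/(2η)) (I^X(h_t) - I^{ΠX}(h_t)) - (d/dt) H_Π(h_t)`. -/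
theorem mixed_term_projected_entropy_bound
    (d : ℕ) (hd : 1 ≤ d) (lam : ℝ) (hlam : 0 < lam)
    (h : ℝ → (Fin d → ℝ) → (Fin d → ℝ) → ℝ)
    (hreg : Regular d h)
    (hmass : ∀ t, 0 ≤ t → intMu d (h t) = 1)
    (hpde : SolvesLRB d lam h) :
    ∀ η : ℝ, 0 < η → ∀ t : ℝ, 0 ≤ t →
      ∃ c : ℝ, HasDerivAt (fun s => HPi d (h s)) c t ∧
        -IM d (h t) ≤ (η / 2) * IV d (h t)
          + (1 / (2 * η)) * (IX d (h t) - IPiX d (h t)) - c := by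
  intro η hη t ht
  refine ⟨_, hasDerivAt_HPi hreg t, ?_⟩
  rw [derivHPi_eq hd hreg hpde ht]
  obtain ⟨c, C, hc, hch, hb⟩ := proj_bounds hreg
  obtain ⟨hD, hDc, ⟨B, hB⟩, hDe⟩ := moment_spec hreg (gauss_integrable d)
  have hpos : ∀ x, 0 < proj d (h t) x := fun x => hc.trans_le (hb (t, x)).1
  have hx : Continuous fun q : (Fin d → ℝ) × (Fin d → ℝ) => (t, q.1) := by fun_prop
  have hbρ : BC d (fun x _ => proj d (h t) x) := by
    refine ⟨(continuous_iff_continuousAt.2 fun e => (hD e).continuousAt).comp hx, C,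
      fun x _ => ?_⟩
    rw [abs_of_pos (hpos x)]
    exact (hb (t, x)).2
  have hbr : ∀ i, BC d (fun x _ => grad1 d (proj d (h t)) x i / proj d (h t) x) := fun i => by
    simp only [div_eq_mul_inv]
    refine BC.mul ?_ (hbρ.inv hc fun x _ => (hb (t, x)).1)
    simp only [grad1_proj hreg]
    exact ⟨(hDc.clm_apply continuous_const).comp hx, _,
      fun x _ => (momentD d h (gauss d) (t, x)).le_of_opNorm_le (hB _) _⟩
  have hgx : ∀ i, BC d (fun x v => gradx d (h t) x v i) := fun i => by
    simpa only [gradx_eq hreg] using bc_totalD hreg t _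
  have hgv : ∀ i, BC d (fun x v => gradv d (h t) x v i) := fun i => by
    simpa only [(gradv_eq hreg _ _ _ _).2] using bc_totalD hreg t _
  have hgrad : ∀ x i, ∫ v, gradx d (h t) x v i * gauss d v = grad1 d (proj d (h t)) x i :=
    fun x i => by
      rw [grad1_proj hreg, hDe]
      simp only [gradx_eq hreg]
  have e1 : intMu d (fun x v => ∑ i, grad1 d (proj d (h t)) x i / proj d (h t) x
      * gradx d (h t) x v i) = IPiX d (h t) := by
    refine integral_congr_ae (Eventually.of_forall fun x => ?_)
    simp only [Finset.sum_mul, mul_assoc]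
    rw [integral_finsetSum _ fun i _ => ((hgx i).integrable x).const_mul _]
    simp only [integral_const_mul, hgrad, nsq, Finset.sum_div]
    exact Finset.sum_congr rfl fun i _ => by ring
  have e2 : intMu d (fun x v => ∑ i, (grad1 d (proj d (h t)) x i / proj d (h t) x) ^ 2
      * h t x v) = IPiX d (h t) := by
    refine integral_congr_ae (Eventually.of_forall fun x => ?_)
    simp only [Finset.sum_mul, mul_assoc]
    rw [integral_finsetSum _ fun i _ => ((bc_self hreg t).integrable x).const_mul _]
    simp only [integral_const_mul, nsq, Finset.sum_div]
    refine Finset.sum_congr rfl fun i _ => ?_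
    change _ * proj d (h t) x = _
    have := (hpos x).ne'
    field_simp
  have key := intMu_young hc hη (bc_self hreg t) (hch t) hgx hgv hbr
  rw [e1, e2] at key
  simp only [IM, IV, IX, dotp, nsq]
  linarith
end
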